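/- arXiv:2505.20465 — 3 statements merged into one kernel-verified Lean document; each statement's English description precedes it below -/
import Mathlib

section
/- Let X = {X_t, t ≥ 0} be an ℝ^d-valued stochastic process on a probability space (Ω, F, P), fix T > 0, and define the progressive increment process X^T by X^T_t = X_t − X_{⌊t/T⌋T} for t ≥ 0. If X is strongly mixing with coefficient α : [0,∞) → [0,∞) — i.e. for all t, s ≥ 0, all A ∈ σ(X_u : 0 ≤ u ≤ t) and all B ∈ σ(X_u : u ≥ t+s), |P(A ∩ B) − P(A)P(B)| ≤ α(s) — then X^T is strongly mixing with coefficient α'(s) ≤ α(s − 2T) for s ≥ 2T: for all t ≥ 0, all s ≥ 2T, all A ∈ σ(X^T_u : 0 ≤ u ≤ t) and all B ∈ σ(X^T_u : u ≥ t+s), one has |P(A ∩ B) − P(A)P(B)| ≤ α(s − 2T). -/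
open MeasureTheory

/-! Every increment `X_u - X_{⌊u/T⌋T}` is a measurable function of two values of `X`, at times `u`
and `⌊u/T⌋T`, and `⌊u/T⌋T ∈ (u - T, u]` (with `⌊u/T⌋T ≥ 0` if `u ≥ 0`). Hence the past of `X^T` up
to `t` lies in the past of `X` up to `t`, and the future of `X^T` from `t + s` lies in the future of
`X` from `t + s - T`, a fortiori from `t + (s - 2T)`. The mixing bound of `X` with gap `s - 2T`
therefore applies to the same two events. -/

/-- If every time `u ∈ S` and its grid point `r u` both lie in `S'`, then the increments
`X u - X (r u)`, `u ∈ S`, generate a sub-σ-algebra of the one generated by `X` on `S'`. -/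
theorem iSup_comap_sub_le {Ω : Type*} {d : ℕ} (X : ℝ → Ω → EuclideanSpace ℝ (Fin d))
    (r : ℝ → ℝ) (S S' : Set ℝ) (h : ∀ u ∈ S, u ∈ S' ∧ r u ∈ S') :
    (⨆ u ∈ S, MeasurableSpace.comap (fun ω => X u ω - X (r u) ω) inferInstance) ≤
      ⨆ u ∈ S', MeasurableSpace.comap (X u) inferInstance := by
  refine iSup₂_le fun u hu => ?_
  have key : ∀ v ∈ S', Measurable[⨆ u ∈ S', MeasurableSpace.comap (X u) inferInstance] (X v) :=
    fun v hv => measurable_iff_comap_le.2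
      (le_iSup₂ (f := fun u (_ : u ∈ S') => MeasurableSpace.comap (X u) inferInstance) v hv)
  exact measurable_iff_comap_le.1 ((key u (h u hu).1).sub (key _ (h u hu).2))

/-- **Strong mixing of the process implies strong mixing of the progressive increment process.**
For `T > 0` define `X^T_t = X_t - X_{⌊t/T⌋ T}`. If `X` is strongly mixing with coefficient `α`,
then `X^T` is strongly mixing with coefficient `α'(s) ≤ α(s - 2T)` for `s ≥ 2T`. -/
theorem strong_mixing_implies_progressive_increments_strong_mixing
    {Ω : Type*} [m0 : MeasurableSpace Ω] (P : Measure Ω) [IsProbabilityMeasure P]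
    (d : ℕ) (T : ℝ) (hT : 0 < T)
    (X : ℝ → Ω → EuclideanSpace ℝ (Fin d))
    (α : ℝ → ℝ) (hα : ∀ s, 0 ≤ α s)
    (hmix : ∀ t s : ℝ, 0 ≤ t → 0 ≤ s → ∀ A B : Set Ω,
      MeasurableSet[⨆ u ∈ Set.Icc (0:ℝ) t, MeasurableSpace.comap (X u) inferInstance] A →
      MeasurableSet[⨆ u ∈ Set.Ici (t + s), MeasurableSpace.comap (X u) inferInstance] B →
      |(P (A ∩ B)).toReal - (P A).toReal * (P B).toReal| ≤ α s) :
    ∀ t s : ℝ, 0 ≤ t → 2 * T ≤ s → ∀ A B : Set Ω,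
      MeasurableSet[⨆ u ∈ Set.Icc (0:ℝ) t, MeasurableSpace.comap
        (fun ω => X u ω - X ((⌊u / T⌋ : ℝ) * T) ω) inferInstance] A →
      MeasurableSet[⨆ u ∈ Set.Ici (t + s), MeasurableSpace.comap
        (fun ω => X u ω - X ((⌊u / T⌋ : ℝ) * T) ω) inferInstance] B →
      |(P (A ∩ B)).toReal - (P A).toReal * (P B).toReal| ≤ α (s - 2 * T) := by
  intro t s ht hs A B hA hB
  have hle : ∀ u : ℝ, (⌊u / T⌋ : ℝ) * T ≤ u := fun u =>
    (le_div_iff₀ hT).1 (Int.floor_le (u / T))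
  have hlt : ∀ u : ℝ, u < (⌊u / T⌋ : ℝ) * T + T := fun u => by
    have := (div_lt_iff₀ hT).1 (Int.lt_floor_add_one (u / T))
    linarith
  refine hmix t (s - 2 * T) ht (by linarith) A B ?_ ?_
  · refine iSup_comap_sub_le X (fun u => (⌊u / T⌋ : ℝ) * T) (Set.Icc 0 t) (Set.Icc 0 t)
      (fun u hu => ⟨hu, ?_, ?_⟩) A hA
    · have : (0 : ℤ) ≤ ⌊u / T⌋ := Int.floor_nonneg.2 (div_nonneg hu.1 hT.le)
      exact mul_nonneg (by exact_mod_cast this) hT.le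
    · exact (hle u).trans hu.2
  · refine iSup_comap_sub_le X (fun u => (⌊u / T⌋ : ℝ) * T) (Set.Ici (t + s))
      (Set.Ici (t + (s - 2 * T))) (fun u hu => ?_) B hB
    have h1 : t + s ≤ u := hu
    have h2 := hlt u
    constructor <;> simp only [Set.mem_Ici] <;> linarith
end

section
/- Let H ∈ (1/2, 1] and let u, v, s, t be real numbers with 0 ≤ u ≤ v < s ≤ t and s − v ≥ (3/2)((t − s) + (v − u)). Then (1/2)·|(s−v)^{2H} + (t−u)^{2H} − (t−v)^{2H} − (s−u)^{2H}| ≤ 3H(2H−1)·(s−v)^{2H−2}·(t−s)·(v−u). -/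
/-!
With `x = s - v`, `a = t - s`, `b = v - u` and `p = 2H`, the quantity inside the absolute value is
the second-order difference `g (x + a) - g x` of `g y = (y + b) ^ p - y ^ p`. The mean value
inequality is applied twice: `y ↦ y ^ (p - 1)` has derivative at most `(p - 1) x ^ (p - 2)` on
`[x, ∞)` because `p ≤ 2`, so `|g'| ≤ p (p - 1) x ^ (p - 2) b` there, and hence the difference is at
most `p (p - 1) x ^ (p - 2) a b`. Half of this is `H (2H - 1) x ^ (2H - 2) a b`, which is a third of
the claimed bound.
-/

/-- First-order bound: for `0 ≤ q ≤ 1` the derivative of `y ↦ y ^ q` is decreasing, hence at most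
its value at `x` on `[x, ∞)`. -/
lemma abs_rpow_add_sub_rpow_le {q x y b : ℝ} (hq0 : 0 ≤ q) (hq1 : q ≤ 1) (hx : 0 < x)
    (hxy : x ≤ y) (hb : 0 ≤ b) :
    |(y + b) ^ q - y ^ q| ≤ q * x ^ (q - 1) * b := by
  have h := (convex_Ici x).norm_image_sub_le_of_norm_hasDerivWithin_le
    (f := fun z : ℝ => z ^ q) (f' := fun z : ℝ => q * z ^ (q - 1)) (C := q * x ^ (q - 1))
    (x := y) (y := y + b)
    (fun z hz => (Real.hasDerivAt_rpow_const
      (Or.inl (hx.trans_le hz).ne')).hasDerivWithinAt)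
    (fun z hz => by
      have hz0 : 0 < z := hx.trans_le hz
      rw [Real.norm_of_nonneg (by positivity)]
      exact mul_le_mul_of_nonneg_left
        (Real.rpow_le_rpow_of_nonpos hx hz (by linarith)) hq0)
    hxy (hxy.trans (by linarith))
  simpa [Real.norm_eq_abs, abs_of_nonneg hb] using h

/-- Second-order difference bound for `y ↦ y ^ p`, `1 ≤ p ≤ 2`. -/
lemma abs_rpow_second_difference_le {p x a b : ℝ} (hp1 : 1 ≤ p) (hp2 : p ≤ 2) (hx : 0 < x)
    (ha : 0 ≤ a) (hb : 0 ≤ b) :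
    |((x + a + b) ^ p - (x + a) ^ p) - ((x + b) ^ p - x ^ p)|
      ≤ p * ((p - 1) * x ^ (p - 2) * b) * a := by
  have h := (convex_Ici x).norm_image_sub_le_of_norm_hasDerivWithin_le
    (f := fun y : ℝ => (y + b) ^ p - y ^ p)
    (f' := fun y : ℝ => p * ((y + b) ^ (p - 1) - y ^ (p - 1)))
    (C := p * ((p - 1) * x ^ (p - 2) * b)) (x := x) (y := x + a)
    (fun y hy => by
      have hy0 : 0 < y := hx.trans_le hy
      have h1 := ((hasDerivAt_id y).add_const b).rpow_const (p := p)
        (Or.inl (by simp only [id]; positivity))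
      have h2 := Real.hasDerivAt_rpow_const (x := y) (p := p) (Or.inl hy0.ne')
      refine ((h1.sub h2).congr_deriv ?_).hasDerivWithinAt
      simp only [id]
      ring)
    (fun y hy => by
      have h1 := abs_rpow_add_sub_rpow_le (q := p - 1) (by linarith) (by linarith) hx hy hb
      rw [show p - 1 - 1 = p - 2 by ring] at h1
      rw [norm_mul, Real.norm_of_nonneg (by linarith : 0 ≤ p), Real.norm_eq_abs]
      exact mul_le_mul_of_nonneg_left h1 (by linarith))
    Set.self_mem_Ici (by simpa using ha)
  simpa [Real.norm_eq_abs, abs_of_nonneg ha] using h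

/-- **Covariance decay estimate for fractional Brownian motion (Appendix E.2.2 of the paper).**
For `H ∈ (1/2, 1]` and `0 ≤ u ≤ v < s ≤ t` with `s − v ≥ (3/2)((t−s) + (v−u))`,
`(1/2)|(s−v)^{2H} + (t−u)^{2H} − (t−v)^{2H} − (s−u)^{2H}|
  ≤ 3H(2H−1)(s−v)^{2H−2}(t−s)(v−u)`. -/
theorem fbm_covariance_decay
    (H : ℝ) (hH1 : 1 / 2 < H) (hH2 : H ≤ 1)
    (u v s t : ℝ) (hu : 0 ≤ u) (huv : u ≤ v) (hvs : v < s) (hst : s ≤ t)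
    (hgap : (3 / 2) * ((t - s) + (v - u)) ≤ s - v) :
    (1 / 2) * |(s - v) ^ (2 * H) + (t - u) ^ (2 * H)
        - (t - v) ^ (2 * H) - (s - u) ^ (2 * H)|
      ≤ 3 * H * (2 * H - 1) * (s - v) ^ (2 * H - 2) * (t - s) * (v - u) := by
  have hx : 0 < s - v := sub_pos.mpr hvs
  have ha : 0 ≤ t - s := sub_nonneg.mpr hst
  have hb : 0 ≤ v - u := sub_nonneg.mpr huv
  have h := abs_rpow_second_difference_le (p := 2 * H) (by linarith) (by linarith) hx ha hb
  rw [show s - v + (t - s) + (v - u) = t - u by ring, show s - v + (t - s) = t - v by ring,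
    show s - v + (v - u) = s - u by ring,
    show (t - u) ^ (2 * H) - (t - v) ^ (2 * H) - ((s - u) ^ (2 * H) - (s - v) ^ (2 * H))
      = (s - v) ^ (2 * H) + (t - u) ^ (2 * H) - (t - v) ^ (2 * H) - (s - u) ^ (2 * H) by ring] at h
  have hK : 0 ≤ H * (2 * H - 1) * (s - v) ^ (2 * H - 2) * (t - s) * (v - u) := by
    have h1 : 0 ≤ H := by linarith
    have h2 : 0 ≤ 2 * H - 1 := by linarith
    positivity
  linarith
end

section
/- Let (Ω, F, P) be a probability space and let X : ℕ → Ω → ℝ^d be a sequence of integrable random vectors that is a martingale with respect to its natural filtration F_m = σ(X_0, …, X_m). Define the lead-lag process Y : ℕ → Ω → ℝ^d × ℝ^d by Y_{2m} = (X_m, X_m) and Y_{2m+1} = (X_{m+1}, X_m) for m ∈ ℕ, and let G_{m'} = σ(Y_0, …, Y_{m'}) be the natural filtration of Y. Then the first (leading) component of Y, i.e. the process m' ↦ (first coordinate of Y_{m'}) with values in ℝ^d, is a martingale with respect to the filtration (G_{m'})_{m' ∈ ℕ}. -/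
/-! At time `n` the lead-lag process is `Y n = (X ⌈n/2⌉, X ⌊n/2⌋)`, with `⌈n/2⌉ = (n + 1) / 2` in
natural-number arithmetic. Hence observing `Y` up to time `n` is the same as observing `X` up to
time `⌈n/2⌉` (`natural_leadLag_eq`), so both the leading component and the natural filtration of
`Y` are those of `X` under the monotone time change `n ↦ ⌈n/2⌉`, and the martingale property of
`X` between times `⌈i/2⌉ ≤ ⌈j/2⌉` is exactly what is required. -/

open MeasureTheory

/-- The natural filtration of the lead-lag process at time `n` is that of `X` at time `⌈n/2⌉`. -/
theorem natural_leadLag_eq {Ω E : Type*} [MeasurableSpace Ω]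
    [NormedAddCommGroup E] [MeasurableSpace E] [BorelSpace E] [SecondCountableTopology E]
    (X : ℕ → Ω → E) (hX : ∀ n, StronglyMeasurable (X n))
    (Y : ℕ → Ω → E × E) (hY : ∀ n, StronglyMeasurable (Y n))
    (hYX : ∀ n, Y n = fun ω => (X ((n + 1) / 2) ω, X (n / 2) ω)) (n : ℕ) :
    Filtration.natural Y hY n = Filtration.natural X hX ((n + 1) / 2) := by
  apply le_antisymm
  · refine iSup₂_le fun j hj => ?_
    have hXm : ∀ k ≤ (n + 1) / 2, Measurable[Filtration.natural X hX ((n + 1) / 2)] (X k) :=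
      fun k hk => measurable_iff_comap_le.2
        (le_iSup₂_of_le (f := fun k (_ : k ≤ (n + 1) / 2) =>
          MeasurableSpace.comap (X k) inferInstance) k hk le_rfl)
    rw [← measurable_iff_comap_le, hYX j]
    exact (hXm _ (by omega)).prodMk (hXm _ (by omega))
  · refine iSup₂_le fun k hk => ?_
    -- `X k` is first seen as the leading component at time `2k - 1`; the truncated subtraction
    -- gives time `0` when `k = 0`, which is also correct.
    have hYm : Measurable[Filtration.natural Y hY n] (Y (2 * k - 1)) :=
      measurable_iff_comap_le.2
        (le_iSup₂_of_le (f := fun j (_ : j ≤ n) =>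
          MeasurableSpace.comap (Y j) inferInstance) (2 * k - 1) (by omega) le_rfl)
    have hXk : X k = fun ω => (Y (2 * k - 1) ω).1 := by
      rw [hYX, show (2 * k - 1 + 1) / 2 = k by omega]
    rw [← measurable_iff_comap_le, hXk]
    exact measurable_fst.comp hYm

/-- **The leading component of the lead-lag transform of a martingale is a martingale
(Appendix F.1 of the paper).** Let `X : ℕ → Ω → ℝ^d` be a martingale with respect to its natural
filtration, and let `Y` be its lead-lag transform, `Y_{2m} = (X_m, X_m)`,
`Y_{2m+1} = (X_{m+1}, X_m)`. Then the first (leading) component of `Y` is a martingale with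
respect to the natural filtration of `Y`. -/
theorem leadLag_leading_component_martingale
    {Ω : Type*} [m0 : MeasurableSpace Ω] (P : Measure Ω) [IsProbabilityMeasure P]
    (d : ℕ) (X : ℕ → Ω → EuclideanSpace ℝ (Fin d))
    (hXmeas : ∀ n, StronglyMeasurable (X n))
    (hX : Martingale X (Filtration.natural X hXmeas) P)
    (Y : ℕ → Ω → EuclideanSpace ℝ (Fin d) × EuclideanSpace ℝ (Fin d))
    (hYmeas : ∀ n, StronglyMeasurable (Y n))
    (hYeven : ∀ (m : ℕ) (ω : Ω), Y (2 * m) ω = (X m ω, X m ω))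
    (hYodd : ∀ (m : ℕ) (ω : Ω), Y (2 * m + 1) ω = (X (m + 1) ω, X m ω)) :
    Martingale (fun m' ω => (Y m' ω).1) (Filtration.natural Y hYmeas) P := by
  have hYX : ∀ n, Y n = fun ω => (X ((n + 1) / 2) ω, X (n / 2) ω) := by
    intro n
    funext ω
    obtain ⟨m, rfl | rfl⟩ := Nat.even_or_odd' n
    · rw [hYeven, show (2 * m + 1) / 2 = m by omega, show 2 * m / 2 = m by omega]
    · rw [hYodd, show (2 * m + 1 + 1) / 2 = m + 1 by omega, show (2 * m + 1) / 2 = m by omega]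
  have hlead : (fun m' ω => (Y m' ω).1) = fun n => X ((n + 1) / 2) := by
    funext n ω
    rw [hYX]
  have hfil : ∀ n, Filtration.natural Y hYmeas n = Filtration.natural X hXmeas ((n + 1) / 2) :=
    natural_leadLag_eq X hXmeas Y hYmeas hYX
  rw [hlead]
  refine ⟨fun n => ?_, fun i j hij => ?_⟩
  · rw [hfil]
    exact hX.1 _
  · rw [hfil]
    exact hX.2 _ _ (by omega)
end
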